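/- arXiv:1805.02018 — 4 statements merged into one kernel-verified Lean document; each statement's English description precedes it below -/
import Mathlib

section
/- Let M ∈ Sp(2n) satisfy the brake symmetry N M N = M⁻¹. If λ₁, λ₂ are eigenvalues of M (acting on ℂ^{2n} by complexification) with eigenvectors u₁ = (x₁,y₁) and u₂ = (x₂,y₂) in ℂ^n⊕ℂ^n, then at least one of the following holds: (1) λ₁ = conj(λ₂); (2) λ₁·conj(λ₂) = 1; (3) ⟨x₁, y₂⟩ = 0. -/
open Matrix

/-- For a brake-symmetric symplectic matrix (`N M N = M⁻¹`) with eigenvalues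
`λ₁, λ₂` and eigenvectors `(x₁,y₁), (x₂,y₂)`, at least one of the following
holds: `λ₁ = conj(λ₂)`, `λ₁·conj(λ₂) = 1`, or `⟨x₁, y₂⟩ = 0`. -/
theorem brake_eigvec_trichotomy (n : ℕ)
    (M : Matrix (Fin n ⊕ Fin n) (Fin n ⊕ Fin n) ℝ)
    (hM : Mᵀ * Matrix.J (Fin n) ℝ * M = Matrix.J (Fin n) ℝ)
    (hbrake : fromBlocks (-1 : Matrix (Fin n) (Fin n) ℝ) 0 0 1 * M
        * fromBlocks (-1) 0 0 1 = M⁻¹)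
    (lam₁ lam₂ : ℂ) (x₁ y₁ x₂ y₂ : Fin n → ℂ)
    (hne₁ : Sum.elim x₁ y₁ ≠ 0) (hne₂ : Sum.elim x₂ y₂ ≠ 0)
    (h₁ : (M.map Complex.ofReal).mulVec (Sum.elim x₁ y₁) = lam₁ • Sum.elim x₁ y₁)
    (h₂ : (M.map Complex.ofReal).mulVec (Sum.elim x₂ y₂) = lam₂ • Sum.elim x₂ y₂) :
    lam₁ = (starRingEnd ℂ) lam₂ ∨ lam₁ * (starRingEnd ℂ) lam₂ = 1
      ∨ ∑ i, x₁ i * (starRingEnd ℂ) (y₂ i) = 0 := by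
  have hJJ : Matrix.J (Fin n) ℝ * Matrix.J (Fin n) ℝ = -1 := Matrix.J_squared _ _
  have hinv : M⁻¹ = -(Matrix.J (Fin n) ℝ * Mᵀ * Matrix.J (Fin n) ℝ) := by
    apply Matrix.inv_eq_left_inv
    rw [neg_mul, Matrix.mul_assoc, Matrix.mul_assoc, ← Matrix.mul_assoc Mᵀ, hM, hJJ, neg_neg]
  have hNN : fromBlocks (-1 : Matrix (Fin n) (Fin n) ℝ) 0 0 1
      * fromBlocks (-1 : Matrix (Fin n) (Fin n) ℝ) 0 0 (1 : Matrix (Fin n) (Fin n) ℝ) = 1 := by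
    simp [fromBlocks_multiply]
  have hK : Matrix.J (Fin n) ℝ * fromBlocks (-1 : Matrix (Fin n) (Fin n) ℝ) 0 0 (1 : Matrix (Fin n) (Fin n) ℝ)
      = fromBlocks 0 (-1) (-1) 0 := by
    simp [Matrix.J, fromBlocks_multiply]
  have hS : Mᵀ * fromBlocks (0 : Matrix (Fin n) (Fin n) ℝ) (-1 : Matrix (Fin n) (Fin n) ℝ)
        (-1 : Matrix (Fin n) (Fin n) ℝ) 0
      = fromBlocks 0 (-1) (-1) 0 * M := by
    have e : Matrix.J (Fin n) ℝ * (fromBlocks (-1 : Matrix (Fin n) (Fin n) ℝ) 0 0 1 * M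
        * fromBlocks (-1) 0 0 1)
        = Mᵀ * Matrix.J (Fin n) ℝ := by
      rw [hbrake, hinv, mul_neg, ← Matrix.mul_assoc, ← Matrix.mul_assoc, hJJ]
      simp
    rw [← hK, ← Matrix.mul_assoc, ← e]
    simp only [Matrix.mul_assoc]
    rw [hNN, Matrix.mul_one]
  -- complexify
  set C := M.map Complex.ofReal with hC
  have hJc : (Matrix.J (Fin n) ℝ).map Complex.ofReal = Matrix.J (Fin n) ℂ := by
    ext i j
    rcases i with i | i <;> rcases j with j | j <;>
      simp [Matrix.J, Matrix.one_apply, apply_ite Complex.ofReal]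
  have hKc : (fromBlocks (0 : Matrix (Fin n) (Fin n) ℝ) (-1 : Matrix (Fin n) (Fin n) ℝ)
        (-1 : Matrix (Fin n) (Fin n) ℝ) 0).map Complex.ofReal
      = fromBlocks (0 : Matrix (Fin n) (Fin n) ℂ) (-1 : Matrix (Fin n) (Fin n) ℂ)
        (-1 : Matrix (Fin n) (Fin n) ℂ) 0 := by
    ext i j
    rcases i with i | i <;> rcases j with j | j <;>
      simp [Matrix.one_apply, apply_ite Complex.ofReal]
  have mm : ∀ A B : Matrix (Fin n ⊕ Fin n) (Fin n ⊕ Fin n) ℝ,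
      (A * B).map Complex.ofReal = A.map Complex.ofReal * B.map Complex.ofReal :=
    fun A B => Matrix.map_mul (f := Complex.ofRealHom)
  have hMc : Cᵀ * Matrix.J (Fin n) ℂ * C = Matrix.J (Fin n) ℂ := by
    have := congrArg (fun A => A.map Complex.ofReal) hM
    simp only [mm, hJc] at this
    exact this
  have hSc : Cᵀ * fromBlocks (0 : Matrix (Fin n) (Fin n) ℂ) (-1 : Matrix (Fin n) (Fin n) ℂ)
        (-1 : Matrix (Fin n) (Fin n) ℂ) 0
      = fromBlocks 0 (-1) (-1) 0 * C := by
    have := congrArg (fun A => A.map Complex.ofReal) hS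
    simp only [mm, hKc] at this
    exact this
  set z : Fin n → ℂ := fun i => (starRingEnd ℂ) (x₂ i) with hz
  set w : Fin n → ℂ := fun i => (starRingEnd ℂ) (y₂ i) with hw
  set m := (starRingEnd ℂ) lam₂ with hm
  have h₃ : C *ᵥ (Sum.elim z w) = m • Sum.elim z w := by
    ext i
    have := congrArg (starRingEnd ℂ) (congrFun h₂ i)
    simp only [mulVec, dotProduct, map_sum, map_mul, Pi.smul_apply, smul_eq_mul] at this ⊢
    have e : ∀ j, (starRingEnd ℂ) (Sum.elim x₂ y₂ j) = Sum.elim z w j := by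
      rintro (j | j) <;> rfl
    simp only [e] at this
    rw [← this]
    refine Finset.sum_congr rfl fun j _ => ?_
    simp [hC]
  clear_value z m C
  set u := Sum.elim x₁ y₁ with hu
  set v := Sum.elim z w with hv
  have key1 : (lam₁ * m) * (u ⬝ᵥ (Matrix.J (Fin n) ℂ *ᵥ v)) = u ⬝ᵥ (Matrix.J (Fin n) ℂ *ᵥ v) := by
    conv_rhs => rw [← hMc, ← mulVec_mulVec, ← mulVec_mulVec, dotProduct_mulVec,
      vecMul_transpose, h₁, h₃, mulVec_smul, smul_dotProduct, dotProduct_smul]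
    simp only [smul_eq_mul]; ring
  have key2 : lam₁ * (u ⬝ᵥ (fromBlocks (0 : Matrix (Fin n) (Fin n) ℂ) (-1 : Matrix (Fin n) (Fin n) ℂ)
        (-1 : Matrix (Fin n) (Fin n) ℂ) 0 *ᵥ v))
      = m * (u ⬝ᵥ (fromBlocks (0 : Matrix (Fin n) (Fin n) ℂ) (-1 : Matrix (Fin n) (Fin n) ℂ)
        (-1 : Matrix (Fin n) (Fin n) ℂ) 0 *ᵥ v)) := by
    have := congrArg (fun A => u ⬝ᵥ (A *ᵥ v)) hSc
    simp only [← mulVec_mulVec, h₃, mulVec_smul, dotProduct_smul] at this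
    rw [dotProduct_mulVec, vecMul_transpose, h₁, smul_dotProduct] at this
    simpa only [smul_eq_mul] using this
  by_cases c1 : lam₁ = m
  · exact Or.inl c1
  by_cases c2 : lam₁ * m = 1
  · exact Or.inr (Or.inl c2)
  refine Or.inr (Or.inr ?_)
  change x₁ ⬝ᵥ w = 0
  have a : u ⬝ᵥ (Matrix.J (Fin n) ℂ *ᵥ v) = 0 := by
    have : (lam₁ * m - 1) * (u ⬝ᵥ (Matrix.J (Fin n) ℂ *ᵥ v)) = 0 := by linear_combination key1
    exact (mul_eq_zero.mp this).resolve_left (sub_ne_zero.mpr c2)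
  have b : u ⬝ᵥ (fromBlocks (0 : Matrix (Fin n) (Fin n) ℂ) (-1 : Matrix (Fin n) (Fin n) ℂ)
        (-1 : Matrix (Fin n) (Fin n) ℂ) 0 *ᵥ v) = 0 := by
    have : (lam₁ - m) * (u ⬝ᵥ (fromBlocks (0 : Matrix (Fin n) (Fin n) ℂ) (-1 : Matrix (Fin n) (Fin n) ℂ)
        (-1 : Matrix (Fin n) (Fin n) ℂ) 0 *ᵥ v)) = 0 := by
      linear_combination key2
    exact (mul_eq_zero.mp this).resolve_left (sub_ne_zero.mpr c1)
  simp only [hu, hv, Matrix.J, fromBlocks_mulVec, Sum.elim_comp_inl, Sum.elim_comp_inr,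
    sumElim_dotProduct_sumElim, zero_mulVec, neg_mulVec, one_mulVec, zero_add, add_zero,
    dotProduct_neg] at a b
  linear_combination (-1/2) * a + (-1/2) * b
end

section
/- Let M ∈ Sp(2n) with n×n blocks M = [[D₁,D₂],[D₃,D₄]], and let λ₁, λ₂ be eigenvalues of M (acting on ℂ^{2n} by complexification) with eigenvectors u₁ = (x₁,y₁), u₂ = (x₂,y₂) ∈ ℂ^n⊕ℂ^n. Let z_i ∈ Gr(M) be the elements corresponding to u_i. Then the Hermitian form 𝔔 = 𝔔(Gr(M), Λ_N; Λ_D), which in these coordinates is given by 𝔔(z,z′) = ⟨x, y′⟩ − ⟨D₁x + D₂y, D₃x′ + D₄y′⟩ for z, z′ corresponding to (x,y), (x′,y′), satisfies 𝔔(z₁, z₂) = (1 − λ₁·conj(λ₂))·⟨x₁, y₂⟩. -/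
open Matrix Module Submodule

noncomputable section

/-- `ℂ^{2n}`, indexed by `Fin n ⊕ Fin n` (the two `n`-blocks). -/
abbrev CV (n : ℕ) := (Fin n ⊕ Fin n) → ℂ

/-- The standard Hermitian inner product `⟨x,y⟩ = ∑ xᵢ conj(yᵢ)`. -/
def herm {m : Type*} [Fintype m] (x y : m → ℂ) : ℂ :=
  ∑ i, x i * (starRingEnd ℂ) (y i)

/-- The standard complex symplectic form `ω(x,y) = ⟨Jx, y⟩` on `ℂ^{2n}`,
where `J = [[0,-I],[I,0]]`. -/
def symForm (n : ℕ) (x y : CV n) : ℂ :=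
  herm ((Matrix.J (Fin n) ℂ).mulVec x) y

/-- The symplectic form `-ω ⊕ ω` on `ℂ^{2n} ⊕ ℂ^{2n}`. -/
def symForm2 (n : ℕ) (p q : CV n × CV n) : ℂ :=
  - symForm n p.1 q.1 + symForm n p.2 q.2

/-- A Lagrangian subspace of a complex symplectic space: `ω` vanishes on it and
it has (half) dimension `m`. -/
def IsLagrangian {X : Type*} [AddCommGroup X] [Module ℂ X]
    (w : X → X → ℂ) (m : ℕ) (Λ : Submodule ℂ X) : Prop :=
  (∀ x ∈ Λ, ∀ y ∈ Λ, w x y = 0) ∧ Module.finrank ℂ Λ = m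

/-- `m⁺(𝔔(α,β;κ))`: the dimension of a maximal subspace of `α ∩ (β + κ)` on which
the form `𝔔(x₁,x₂) = ω(y₁,z₂)` (with `x_j = y_j + z_j`, `y_j ∈ β`, `z_j ∈ κ`) is
positive definite. -/
def posInd {X : Type*} [AddCommGroup X] [Module ℂ X]
    (w : X → X → ℂ) (α β κ : Submodule ℂ X) : ℕ :=
  sSup {k : ℕ | ∃ P : Submodule ℂ X, P ≤ α ⊓ (β ⊔ κ) ∧
    (∀ x ∈ P, x ≠ 0 → ∀ y ∈ β, ∀ z ∈ κ, x = y + z → 0 < (w y z).re) ∧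
    k = Module.finrank ℂ P}

/-- The triple index `i(α,β,κ) = m⁺(𝔔(α,β;κ)) + dim(α∩κ) − dim(α∩β∩κ)`. -/
def tripleIdx {X : Type*} [AddCommGroup X] [Module ℂ X]
    (w : X → X → ℂ) (α β κ : Submodule ℂ X) : ℕ :=
  posInd w α β κ + Module.finrank ℂ ↥(α ⊓ κ) - Module.finrank ℂ ↥(α ⊓ β ⊓ κ)

/-- `Λ^n_D = ℂ^n ⊕ {0}`, the Dirichlet Lagrangian (second block vanishes). -/
def LnD (n : ℕ) : Submodule ℂ (CV n) :=
  LinearMap.ker (LinearMap.funLeft ℂ ℂ (Sum.inr : Fin n → Fin n ⊕ Fin n))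

/-- `Λ^n_N = {0} ⊕ ℂ^n`, the Neumann Lagrangian (first block vanishes). -/
def LnN (n : ℕ) : Submodule ℂ (CV n) :=
  LinearMap.ker (LinearMap.funLeft ℂ ℂ (Sum.inl : Fin n → Fin n ⊕ Fin n))

/-- `Λ_D = Λ^n_D ⊕ Λ^n_D ⊂ ℂ^{4n}`. -/
def LD (n : ℕ) : Submodule ℂ (CV n × CV n) := (LnD n).prod (LnD n)

/-- `Λ_N = Λ^n_N ⊕ Λ^n_N ⊂ ℂ^{4n}`. -/
def LN (n : ℕ) : Submodule ℂ (CV n × CV n) := (LnN n).prod (LnN n)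

/-- Projection of `ℂ^{2n}` onto its `Λ^n_N` component (along `Λ^n_D`). -/
def projN (n : ℕ) (a : CV n) : CV n := Sum.elim 0 fun j => a (Sum.inr j)

/-- Projection of `ℂ^{2n}` onto its `Λ^n_D` component (along `Λ^n_N`). -/
def projD (n : ℕ) (a : CV n) : CV n := Sum.elim (fun j => a (Sum.inl j)) 0

/-- The Hermitian form `𝔔(Gr(M), Λ_N; Λ_D)` on `ℂ^{4n}`:
`𝔔(z₁,z₂) = (−ω⊕ω)(w₁, v₂)` where `z_j = w_j + v_j`, `w_j ∈ Λ_N`, `v_j ∈ Λ_D`. -/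
def QGr (n : ℕ) (z w : CV n × CV n) : ℂ :=
  symForm2 n (projN n z.1, projN n z.2) (projD n w.1, projD n w.2)

theorem symForm_split (n : ℕ) (a b : CV n) :
    symForm n a b = herm (fun j => a (Sum.inl j)) (fun j => b (Sum.inr j))
      - herm (fun j => a (Sum.inr j)) (fun j => b (Sum.inl j)) := by
  have h : (Matrix.J (Fin n) ℂ).mulVec a
      = Sum.elim (fun j => - a (Sum.inr j)) (fun j => a (Sum.inl j)) := by
    rw [Matrix.J, Matrix.fromBlocks_mulVec]
    ext i
    rcases i with i | i <;> simp [Matrix.neg_mulVec]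
  rw [symForm, h]
  simp only [herm, Fintype.sum_sum_type, Sum.elim_inl, Sum.elim_inr, neg_mul,
    Finset.sum_neg_distrib]
  ring

theorem symForm_invariant (n : ℕ) (M : Matrix (Fin n ⊕ Fin n) (Fin n ⊕ Fin n) ℝ)
    (hM : Mᵀ * Matrix.J (Fin n) ℝ * M = Matrix.J (Fin n) ℝ) (a b : CV n) :
    symForm n ((M.map Complex.ofReal).mulVec a) ((M.map Complex.ofReal).mulVec b)
      = symForm n a b := by
  have hJ : (Matrix.J (Fin n) ℝ).map Complex.ofReal = Matrix.J (Fin n) ℂ := by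
    ext i j
    rcases i with i | i <;> rcases j with j | j <;>
      simp [Matrix.J, Matrix.one_apply, apply_ite Complex.ofReal]
  have hC : (M.map Complex.ofReal)ᵀ * Matrix.J (Fin n) ℂ * M.map Complex.ofReal
      = Matrix.J (Fin n) ℂ := by
    have := congrArg (fun A => A.map Complex.ofRealHom) hM
    simp only [Matrix.map_mul] at this
    rw [← hJ]
    exact this
  have hh : ∀ x y : CV n, herm x y = x ⬝ᵥ star y := fun x y => rfl
  have hs : star ((M.map Complex.ofReal).mulVec b) = (M.map Complex.ofReal).mulVec (star b) := by
    ext i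
    simp [Matrix.mulVec, dotProduct]
  rw [symForm, symForm, hh, hh, hs, Matrix.dotProduct_mulVec, ← Matrix.mulVec_transpose,
    Matrix.mulVec_mulVec, Matrix.mulVec_mulVec, hC]

theorem QGr_eq (n : ℕ) (M : Matrix (Fin n ⊕ Fin n) (Fin n ⊕ Fin n) ℝ)
    (hM : Mᵀ * Matrix.J (Fin n) ℝ * M = Matrix.J (Fin n) ℝ) (a b : CV n) :
    QGr n (a, (M.map Complex.ofReal).mulVec a) (b, (M.map Complex.ofReal).mulVec b)
      = herm (fun j => a (Sum.inl j)) (fun j => b (Sum.inr j))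
        - herm (fun j => (M.map Complex.ofReal).mulVec a (Sum.inl j))
            (fun j => (M.map Complex.ofReal).mulVec b (Sum.inr j)) := by
  have h := symForm_invariant n M hM a b
  rw [symForm_split, symForm_split] at h
  have hp : ∀ c d : CV n, symForm n (projN n c) (projD n d)
      = - herm (fun j => c (Sum.inr j)) (fun j => d (Sum.inl j)) := by
    intro c d
    rw [symForm_split]
    simp [projN, projD, herm]
  simp only [QGr, symForm2, hp]
  linear_combination h

/-- The coordinate formula for `𝔔(Gr(M), Λ_N; Λ_D)` on the graph of a symplectic
matrix `M`, and its evaluation `𝔔(z₁,z₂) = (1 − λ₁·conj(λ₂))·⟨x₁,y₂⟩` on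
eigenvectors. -/
theorem QGr_eigvec_formula (n : ℕ)
    (M : Matrix (Fin n ⊕ Fin n) (Fin n ⊕ Fin n) ℝ)
    (hM : Mᵀ * Matrix.J (Fin n) ℝ * M = Matrix.J (Fin n) ℝ)
    (lam₁ lam₂ : ℂ) (x₁ y₁ x₂ y₂ : Fin n → ℂ)
    (hne₁ : Sum.elim x₁ y₁ ≠ 0) (hne₂ : Sum.elim x₂ y₂ ≠ 0)
    (h₁ : (M.map Complex.ofReal).mulVec (Sum.elim x₁ y₁) = lam₁ • Sum.elim x₁ y₁)
    (h₂ : (M.map Complex.ofReal).mulVec (Sum.elim x₂ y₂) = lam₂ • Sum.elim x₂ y₂) :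
    (∀ x y x' y' : Fin n → ℂ,
      QGr n (Sum.elim x y, (M.map Complex.ofReal).mulVec (Sum.elim x y))
            (Sum.elim x' y', (M.map Complex.ofReal).mulVec (Sum.elim x' y'))
        = herm x y'
          - herm ((M.toBlocks₁₁.map Complex.ofReal).mulVec x
                    + (M.toBlocks₁₂.map Complex.ofReal).mulVec y)
                 ((M.toBlocks₂₁.map Complex.ofReal).mulVec x'
                    + (M.toBlocks₂₂.map Complex.ofReal).mulVec y'))
    ∧ QGr n (Sum.elim x₁ y₁, (M.map Complex.ofReal).mulVec (Sum.elim x₁ y₁))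
            (Sum.elim x₂ y₂, (M.map Complex.ofReal).mulVec (Sum.elim x₂ y₂))
        = (1 - lam₁ * (starRingEnd ℂ) lam₂) * herm x₁ y₂ := by
  constructor
  · intro x y x' y'
    rw [QGr_eq n M hM]
    have hb : ∀ u v : Fin n → ℂ, (M.map Complex.ofReal).mulVec (Sum.elim u v)
        = Sum.elim ((M.toBlocks₁₁.map Complex.ofReal).mulVec u
                    + (M.toBlocks₁₂.map Complex.ofReal).mulVec v)
            ((M.toBlocks₂₁.map Complex.ofReal).mulVec u
                    + (M.toBlocks₂₂.map Complex.ofReal).mulVec v) := by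
      intro u v
      ext i
      rcases i with i | i <;>
        simp [Matrix.mulVec, dotProduct, Matrix.toBlocks₁₁, Matrix.toBlocks₁₂,
          Matrix.toBlocks₂₁, Matrix.toBlocks₂₂]
    rw [hb, hb]
    rfl
  · rw [QGr_eq n M hM, h₁, h₂]
    simp only [herm, Pi.smul_apply, Sum.elim_inl, Sum.elim_inr, smul_eq_mul, map_mul]
    rw [sub_mul, one_mul, Finset.mul_sum]
    congr 1
    refine Finset.sum_congr rfl fun i _ => ?_
    ring
end
end

section
/- Let M ∈ Sp(2n) satisfy the brake symmetry N M N = M⁻¹, with n×n blocks M = [[D₁,D₂],[D₃,D₄]]. Let λ₁, λ₂ be eigenvalues of M (acting on ℂ^{2n} by complexification) with eigenvectors u₁ = (x₁,y₁), u₂ = (x₂,y₂), and let z₁, z₂ be the corresponding elements of Gr(M). If λ₁ ≠ conj(λ₂), or if λ₁ = λ₂ = 1, or if λ₁ = λ₂ = −1, then z₁ and z₂ are 𝔔-orthogonal: 𝔔(Gr(M), Λ_N; Λ_D)(z₁, z₂) = 0. -/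
open Matrix Module Submodule

noncomputable section

/-- For a brake-symmetric symplectic matrix `M` (`N M N = M⁻¹`), if `λ₁ ≠ conj(λ₂)`,
or `λ₁ = λ₂ = 1`, or `λ₁ = λ₂ = −1`, then the graph elements `z₁, z₂`
corresponding to the eigenvectors are `𝔔`-orthogonal. -/
theorem QGr_orthogonal_of_eigvec (n : ℕ)
    (M : Matrix (Fin n ⊕ Fin n) (Fin n ⊕ Fin n) ℝ)
    (hM : Mᵀ * Matrix.J (Fin n) ℝ * M = Matrix.J (Fin n) ℝ)
    (hbrake : fromBlocks (-1 : Matrix (Fin n) (Fin n) ℝ) 0 0 1 * M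
        * fromBlocks (-1) 0 0 1 = M⁻¹)
    (lam₁ lam₂ : ℂ) (x₁ y₁ x₂ y₂ : Fin n → ℂ)
    (hne₁ : Sum.elim x₁ y₁ ≠ 0) (hne₂ : Sum.elim x₂ y₂ ≠ 0)
    (h₁ : (M.map Complex.ofReal).mulVec (Sum.elim x₁ y₁) = lam₁ • Sum.elim x₁ y₁)
    (h₂ : (M.map Complex.ofReal).mulVec (Sum.elim x₂ y₂) = lam₂ • Sum.elim x₂ y₂)
    (hcase : lam₁ ≠ (starRingEnd ℂ) lam₂ ∨ (lam₁ = 1 ∧ lam₂ = 1)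
      ∨ (lam₁ = -1 ∧ lam₂ = -1)) :
    QGr n (Sum.elim x₁ y₁, (M.map Complex.ofReal).mulVec (Sum.elim x₁ y₁))
          (Sum.elim x₂ y₂, (M.map Complex.ofReal).mulVec (Sum.elim x₂ y₂)) = 0 := by
  have hdet : IsUnit M.det := by
    have h := congrArg Matrix.det hM
    rw [det_mul, det_mul, mul_comm] at h
    have hJ := Matrix.isUnit_det_J (Fin n) ℝ
    rw [← h] at hJ
    exact isUnit_of_mul_isUnit_left hJ
  set N : Matrix (Fin n ⊕ Fin n) (Fin n ⊕ Fin n) ℝ := fromBlocks (-1) 0 0 1 with hN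
  have hNN : N * N = 1 := by
    rw [hN, fromBlocks_multiply]; simp
  have hMNM : M * N * M = N := by
    have h : N * (N * M * N * M) = N * 1 := by
      rw [hbrake, nonsing_inv_mul _ hdet]
    rw [mul_one] at h
    calc M * N * M = (N * N) * (M * N * M) := by rw [hNN, one_mul]
      _ = N * (N * M * N * M) := by simp only [Matrix.mul_assoc]
      _ = N := h
  have hJN : Mᵀ * (Matrix.J (Fin n) ℝ * N) = (Matrix.J (Fin n) ℝ * N) * M := by
    calc Mᵀ * (Matrix.J (Fin n) ℝ * N) = Mᵀ * (Matrix.J (Fin n) ℝ * (M * N * M)) := by rw [hMNM]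
      _ = (Mᵀ * Matrix.J (Fin n) ℝ * M) * N * M := by simp only [Matrix.mul_assoc]
      _ = _ := by rw [hM]
  set C := M.map Complex.ofReal with hC
  have hmm : ∀ A B : Matrix (Fin n ⊕ Fin n) (Fin n ⊕ Fin n) ℝ,
      (A * B).map Complex.ofReal = A.map Complex.ofReal * B.map Complex.ofReal :=
    fun A B => Matrix.map_mul (f := Complex.ofRealHom)
  have hJc : (Matrix.J (Fin n) ℝ).map Complex.ofReal = Matrix.J (Fin n) ℂ := by
    ext i j
    rcases i with i | i <;> rcases j with j | j <;> simp [Matrix.J, Matrix.one_apply] <;>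
      split_ifs <;> simp
  have hNc : N.map Complex.ofReal = fromBlocks (-1 : Matrix (Fin n) (Fin n) ℂ) 0 0 1 := by
    ext i j
    rcases i with i | i <;> rcases j with j | j <;> simp [hN, Matrix.one_apply] <;>
      split_ifs <;> simp
  have hM' := congrArg (fun A => A.map Complex.ofReal) hM
  have hJN' := congrArg (fun A => A.map Complex.ofReal) hJN
  simp only [hmm, hJc, hNc, transpose_map, ← hC] at hM' hJN'
  set u := Sum.elim x₁ y₁ with hu
  set v : Fin n ⊕ Fin n → ℂ := star (Sum.elim x₂ y₂) with hv
  have hCv : C *ᵥ v = (starRingEnd ℂ lam₂) • v := by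
    have h := congrArg star h₂
    rw [star_smul] at h
    refine Eq.trans ?_ h
    ext i
    simp [hC, hv, mulVec, dotProduct]
  have e1 : lam₁ * (starRingEnd ℂ lam₂) * (v ⬝ᵥ (Matrix.J (Fin n) ℂ *ᵥ u))
      = v ⬝ᵥ (Matrix.J (Fin n) ℂ *ᵥ u) := by
    conv_rhs => rw [← hM']
    rw [← mulVec_mulVec, ← mulVec_mulVec, dotProduct_mulVec v Cᵀ, vecMul_transpose, hCv, h₁,
      mulVec_smul, dotProduct_smul, smul_dotProduct, smul_eq_mul, smul_eq_mul, mul_assoc]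
  have e2 : (starRingEnd ℂ lam₂) * (v ⬝ᵥ ((Matrix.J (Fin n) ℂ * fromBlocks (-1) 0 0 1) *ᵥ u))
      = lam₁ * (v ⬝ᵥ ((Matrix.J (Fin n) ℂ * fromBlocks (-1) 0 0 1) *ᵥ u)) := by
    have h := congrArg (fun A => v ⬝ᵥ (A *ᵥ u)) hJN'
    rw [← mulVec_mulVec _ Cᵀ, dotProduct_mulVec v Cᵀ, vecMul_transpose, hCv,
      ← mulVec_mulVec _ _ C, h₁,
      mulVec_smul, dotProduct_smul, smul_dotProduct, smul_eq_mul, smul_eq_mul] at h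
    exact h
  have f1 : v ⬝ᵥ (Matrix.J (Fin n) ℂ *ᵥ u) = - (star x₂ ⬝ᵥ y₁) + star y₂ ⬝ᵥ x₁ := by
    have : v = Sum.elim (star x₂) (star y₂) := by
      ext i; rcases i with i | i <;> simp [hv]
    rw [this, hu, Matrix.J, fromBlocks_mulVec, sumElim_dotProduct_sumElim]
    simp [neg_mulVec]
  have f2 : v ⬝ᵥ ((Matrix.J (Fin n) ℂ * fromBlocks (-1) 0 0 1) *ᵥ u)
      = - (star x₂ ⬝ᵥ y₁) - star y₂ ⬝ᵥ x₁ := by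
    have : v = Sum.elim (star x₂) (star y₂) := by
      ext i; rcases i with i | i <;> simp [hv]
    rw [this, hu, Matrix.J, fromBlocks_multiply, fromBlocks_mulVec, sumElim_dotProduct_sumElim]
    simp [neg_mulVec, sub_eq_add_neg]
  have g : QGr n (u, C *ᵥ u) (Sum.elim x₂ y₂, C *ᵥ Sum.elim x₂ y₂)
      = (1 - lam₁ * (starRingEnd ℂ lam₂)) * (star x₂ ⬝ᵥ y₁) := by
    rw [h₁, h₂]
    simp only [QGr, symForm2, symForm, herm, projN, projD, Matrix.J, fromBlocks_mulVec,
      Fintype.sum_sum_type, hu]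
    simp [neg_mulVec, dotProduct, sub_mul, Finset.mul_sum]
    rw [← sub_eq_add_neg]
    congr 1
    · exact Finset.sum_congr rfl fun i _ => by ring
    · exact Finset.sum_congr rfl fun i _ => by ring
  rw [g]
  rw [f1] at e1
  rw [f2] at e2
  rcases hcase with h | ⟨h, h'⟩ | ⟨h, h'⟩
  · have k : - (star x₂ ⬝ᵥ y₁) - star y₂ ⬝ᵥ x₁ = 0 := by
      have : (lam₁ - starRingEnd ℂ lam₂) * (- (star x₂ ⬝ᵥ y₁) - star y₂ ⬝ᵥ x₁) = 0 := by
        linear_combination -e2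
      exact (mul_eq_zero.mp this).resolve_left (sub_ne_zero.mpr h)
    linear_combination (1/2) * e1 - (1/2) * (1 - lam₁ * starRingEnd ℂ lam₂) * k
  · simp [h, h']
  · simp [h, h']
end
end

section
/- Let M ∈ Sp(2n) satisfy the brake symmetry N M N = M⁻¹, acting on ℂ^{2n} by complexification. Set m⁺ = m⁺(𝔔(Gr(M), Λ_N; Λ_D)), d_N = dim(Gr(M) ∩ Λ_N), d_D = dim(Gr(M) ∩ Λ_D). Then: (i) the sum of dim_ℂ ker(M − λI_{2n}) over all eigenvalues λ of M with Im(λ) > 0, together with λ ∈ {1, −1}, is at most m⁺ + d_N + d_D; (ii) the sum of dim_ℂ ker(M − λI_{2n}) over all eigenvalues λ of M with Im(λ) > 0 is at most m⁺ + d_D. -/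
open Matrix Module Submodule

noncomputable section

lemma pos_aux {ι : Type*} [Fintype ι] [DecidableEq ι] (K : Matrix ι ι ℂ) (hK : K.IsHermitian)
    (W : Submodule ℂ (ι → ℂ)) (h0 : ∀ w ∈ W, star w ⬝ᵥ K *ᵥ w = 0)
    (hd : ∀ w ∈ W, K *ᵥ w = 0 → w = 0) :
    ∃ P : Submodule ℂ (ι → ℂ), finrank ℂ P = finrank ℂ W ∧
      ∀ x ∈ P, x ≠ 0 → 0 < (star x ⬝ᵥ K *ᵥ x).re := by
  obtain ⟨c, hc, hcb⟩ : ∃ c : ℝ, 0 < c ∧ ∀ u : ι → ℂ,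
      -(c * ∑ i, ‖u i‖ ^ 2) ≤ (star u ⬝ᵥ K *ᵥ u).re := by
    refine ⟨∑ i, ∑ j, ‖K i j‖ + 1, by positivity, fun u => ?_⟩
    have h1 : ‖star u ⬝ᵥ K *ᵥ u‖ ≤ ∑ i, ∑ j, ‖K i j‖ * ∑ i, ‖u i‖ ^ 2 := by
      refine (norm_sum_le _ _).trans (Finset.sum_le_sum fun i _ => ?_)
      change ‖star u i * ∑ j, K i j * u j‖ ≤ _
      rw [Finset.mul_sum]
      refine (norm_sum_le _ _).trans (Finset.sum_le_sum fun j _ => ?_)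
      have hi : ‖u i‖ ^ 2 ≤ ∑ i, ‖u i‖ ^ 2 :=
        Finset.single_le_sum (f := fun i => ‖u i‖ ^ 2) (fun _ _ => by positivity) (Finset.mem_univ i)
      have hj : ‖u j‖ ^ 2 ≤ ∑ i, ‖u i‖ ^ 2 :=
        Finset.single_le_sum (f := fun i => ‖u i‖ ^ 2) (fun _ _ => by positivity) (Finset.mem_univ j)
      have : ‖u i‖ * ‖u j‖ ≤ ∑ i, ‖u i‖ ^ 2 := by nlinarith [sq_nonneg (‖u i‖ - ‖u j‖)]
      simp only [norm_mul, Pi.star_apply, norm_star]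
      calc _ = ‖K i j‖ * (‖u i‖ * ‖u j‖) := by ring
        _ ≤ _ := by gcongr
    have h2 := (abs_le.1 (Complex.abs_re_le_norm (star u ⬝ᵥ K *ᵥ u))).1
    have h3 : 0 ≤ ∑ i, ‖u i‖ ^ 2 := by positivity
    simp only [← Finset.sum_mul] at h1
    linarith
  have hself : ∀ u : ι → ℂ, star u ⬝ᵥ u = ((∑ i, ‖u i‖ ^ 2 : ℝ) : ℂ) := by
    intro u
    simp only [dotProduct, Pi.star_apply]
    push_cast
    refine Finset.sum_congr rfl fun i _ => ?_
    exact Complex.conj_mul' (u i)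
  set t : ℝ := 1 / c with ht
  have htpos : 0 < t := by positivity
  let F : (ι → ℂ) →ₗ[ℂ] (ι → ℂ) := LinearMap.id + (t : ℂ) • K.mulVecLin
  have key : ∀ w ∈ W, w ≠ 0 → 0 < (star (F w) ⬝ᵥ K *ᵥ (F w)).re := by
    intro w hw hw0
    set u := K *ᵥ w with hu
    have hu0 : u ≠ 0 := fun h => hw0 (hd w hw h)
    have hF : F w = w + (t : ℂ) • u := by simp [F, hu]
    have hswap : star w ⬝ᵥ K *ᵥ u = star u ⬝ᵥ u := by
      rw [dotProduct_mulVec, hu, star_mulVec, hK.eq]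
    have hsum : 0 < ∑ i, ‖u i‖ ^ 2 := by
      obtain ⟨i, hi⟩ := Function.ne_iff.1 hu0
      exact Finset.sum_pos' (fun _ _ => by positivity) ⟨i, Finset.mem_univ _, by
        have : 0 < ‖u i‖ := norm_pos_iff.2 hi
        positivity⟩
    have hexp : star (F w) ⬝ᵥ K *ᵥ (F w) =
        ((2 * t * ∑ i, ‖u i‖ ^ 2 : ℝ) : ℂ) + ((t ^ 2 : ℝ) : ℂ) * (star u ⬝ᵥ K *ᵥ u) := by
      rw [hF, mulVec_add, mulVec_smul, ← hu, star_add, star_smul]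
      simp only [add_dotProduct, dotProduct_add, smul_dotProduct, dotProduct_smul, hswap, hself,
        smul_eq_mul]
      have := h0 w hw
      rw [← hu] at this
      rw [this]
      simp only [Complex.star_def, Complex.conj_ofReal]
      push_cast
      ring
    rw [hexp, Complex.add_re, Complex.re_ofReal_mul, Complex.ofReal_re]
    have hb := hcb u
    have : t ^ 2 * -(c * ∑ i, ‖u i‖ ^ 2) ≤ t ^ 2 * (star u ⬝ᵥ K *ᵥ u).re := by gcongr
    have h2 : t ^ 2 * -(c * ∑ i, ‖u i‖ ^ 2) = - (t * ∑ i, ‖u i‖ ^ 2) := by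
      rw [ht]; field_simp
    have h3 : 0 < t * ∑ i, ‖u i‖ ^ 2 := by positivity
    linarith
  refine ⟨W.map F, ?_, ?_⟩
  · have hinj : Function.Injective (F.domRestrict W) := by
      rw [← LinearMap.ker_eq_bot, LinearMap.ker_eq_bot']
      rintro ⟨w, hw⟩ h
      by_contra hne
      have h' : F w = 0 := h
      have := key w hw (fun h => hne (by ext1; exact h))
      rw [h'] at this
      simp at this
    have := LinearMap.finrank_range_of_inj hinj
    rwa [LinearMap.range_domRestrict] at this
  · rintro _ ⟨w, hw, rfl⟩ hx
    exact key w hw (fun h => hx (by rw [h, map_zero]))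

lemma sum_finrank {V : Type*} [AddCommGroup V] [Module ℂ V] [FiniteDimensional ℂ V]
    (f : V →ₗ[ℂ] V) (S : Finset ℂ) :
    ∑ l ∈ S, finrank ℂ (LinearMap.ker (f - l • (LinearMap.id : V →ₗ[ℂ] V))) =
      finrank ℂ ↥(⨆ l ∈ S, Module.End.eigenspace f l) := by
  have he : ∀ l : ℂ, LinearMap.ker (f - l • (LinearMap.id : V →ₗ[ℂ] V)) = Module.End.eigenspace f l := by
    intro l; ext x; simp [sub_eq_zero]
  rw [Finset.sum_congr rfl fun l _ => (show _ = finrank ℂ ↥(Module.End.eigenspace f l) by rw [he])]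
  induction S using Finset.induction_on with
  | empty =>
    have h : (⨆ l ∈ (∅ : Finset ℂ), Module.End.eigenspace f l) = ⊥ := by simp
    rw [h, finrank_bot, Finset.sum_empty]
  | insert a s ha ih =>
    rw [Finset.sum_insert ha, ih, Finset.iSup_insert]
    have hdis : Disjoint (Module.End.eigenspace f a) (⨆ l ∈ s, Module.End.eigenspace f l) :=
      (Module.End.eigenspaces_iSupIndep f).disjoint_biSup (y := (s : Set ℂ)) (by simpa using ha)
    have := Submodule.finrank_sup_add_finrank_inf_eq (Module.End.eigenspace f a) (⨆ l ∈ s, Module.End.eigenspace f l)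
    rw [hdis.eq_bot, finrank_bot] at this
    omega

lemma mat_facts (n : ℕ) (M : Matrix (Fin n ⊕ Fin n) (Fin n ⊕ Fin n) ℝ)
    (hM : Mᵀ * Matrix.J (Fin n) ℝ * M = Matrix.J (Fin n) ℝ)
    (hbrake : fromBlocks (-1 : Matrix (Fin n) (Fin n) ℝ) 0 0 1 * M
        * fromBlocks (-1) 0 0 1 = M⁻¹) :
    Mᵀ * fromBlocks 0 1 1 0 = fromBlocks 0 1 1 0 * M ∧
    fromBlocks (-1 : Matrix (Fin n) (Fin n) ℝ) 0 0 1 * M * fromBlocks (-1) 0 0 1 * M = 1 := by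
  have hJ : Matrix.J (Fin n) ℝ * Matrix.J (Fin n) ℝ = -1 := Matrix.J_squared _ _
  have hu : (-(Matrix.J (Fin n) ℝ) * Mᵀ * Matrix.J (Fin n) ℝ) * M = 1 := by
    rw [mul_assoc, mul_assoc, ← mul_assoc Mᵀ, hM, neg_mul, hJ, neg_neg]
  have hu' := mul_eq_one_comm.1 hu
  have hinv : M⁻¹ * M = 1 := by
    rw [Matrix.inv_eq_left_inv hu, hu]
  have hinv' : M * M⁻¹ = 1 := mul_eq_one_comm.1 hinv
  refine ⟨?_, by rw [hbrake, hinv]⟩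
  have hR : (fromBlocks 0 1 1 0 : Matrix (Fin n ⊕ Fin n) (Fin n ⊕ Fin n) ℝ) =
      - (Matrix.J (Fin n) ℝ * fromBlocks (-1) 0 0 1) := by
    simp [Matrix.J, fromBlocks_multiply, fromBlocks_neg]
  have hNN : (fromBlocks (-1) 0 0 1 * fromBlocks (-1) 0 0 1 :
      Matrix (Fin n ⊕ Fin n) (Fin n ⊕ Fin n) ℝ) = 1 := by
    simp [fromBlocks_multiply]
  have h1 : Mᵀ * Matrix.J (Fin n) ℝ = Matrix.J (Fin n) ℝ * M⁻¹ := by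
    calc _ = Mᵀ * Matrix.J (Fin n) ℝ * (M * M⁻¹) := by rw [hinv', mul_one]
      _ = _ := by rw [← mul_assoc, hM]
  rw [hR, mul_neg, neg_mul, ← mul_assoc, h1, ← hbrake]
  congr 1
  simp only [mul_assoc, hNN, mul_one]

lemma mat_facts_C (n : ℕ) (M : Matrix (Fin n ⊕ Fin n) (Fin n ⊕ Fin n) ℝ)
    (hM : Mᵀ * Matrix.J (Fin n) ℝ * M = Matrix.J (Fin n) ℝ)
    (hbrake : fromBlocks (-1 : Matrix (Fin n) (Fin n) ℝ) 0 0 1 * M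
        * fromBlocks (-1) 0 0 1 = M⁻¹) :
    (M.map Complex.ofReal)ᴴ * fromBlocks 0 1 1 0 = fromBlocks 0 1 1 0 * (M.map Complex.ofReal) ∧
    fromBlocks (-1 : Matrix (Fin n) (Fin n) ℂ) 0 0 1 * (M.map Complex.ofReal) *
      fromBlocks (-1) 0 0 1 * (M.map Complex.ofReal) = 1 := by
  obtain ⟨h1, h2⟩ := mat_facts n M hM hbrake
  have hct : (M.map Complex.ofReal)ᴴ = Mᵀ.map Complex.ofRealHom := by
    ext i j; simp [conjTranspose_apply]
  have hR : (fromBlocks 0 1 1 0 : Matrix (Fin n ⊕ Fin n) (Fin n ⊕ Fin n) ℂ) =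
      (fromBlocks 0 1 1 0 : Matrix (Fin n ⊕ Fin n) (Fin n ⊕ Fin n) ℝ).map Complex.ofRealHom := by
    rw [fromBlocks_map]; simp
  have hN : (fromBlocks (-1) 0 0 1 : Matrix (Fin n ⊕ Fin n) (Fin n ⊕ Fin n) ℂ) =
      (fromBlocks (-1) 0 0 1 : Matrix (Fin n ⊕ Fin n) (Fin n ⊕ Fin n) ℝ).map
        Complex.ofRealHom := by
    rw [fromBlocks_map]; congr 1 <;> ext i j <;> simp [Matrix.one_apply, apply_ite]
  have hMM : M.map Complex.ofReal = M.map Complex.ofRealHom := rfl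
  rw [hct, hR, hN, hMM]
  simp only [← Matrix.map_mul, h1, h2]
  simp

/-- The hyperbolic form `R`, twice the real part of the pairing of the two blocks. -/
lemma R_form (n : ℕ) (y z : CV n) (hy : y ∈ LnN n) (hz : z ∈ LnD n) :
    (star (y + z) ⬝ᵥ (fromBlocks 0 1 1 0 : Matrix (Fin n ⊕ Fin n) (Fin n ⊕ Fin n) ℂ) *ᵥ (y + z)).re
      = - 2 * (symForm n y z).re := by
  have hy' : ∀ i, y (Sum.inl i) = 0 := fun i => congrFun (LinearMap.mem_ker.1 hy) i
  have hz' : ∀ i, z (Sum.inr i) = 0 := fun i => congrFun (LinearMap.mem_ker.1 hz) i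
  simp only [symForm, herm, Matrix.J, dotProduct, mulVec, Fintype.sum_sum_type, fromBlocks_apply₁₁,
    fromBlocks_apply₁₂, fromBlocks_apply₂₁, fromBlocks_apply₂₂, Pi.add_apply, Pi.star_apply, hy', hz']
  simp [Matrix.one_apply, Finset.sum_neg_distrib]
  rw [two_mul]
  congr 1
  refine Finset.sum_congr rfl fun i _ => ?_
  ring

lemma posInd_ge (n : ℕ) (M : Matrix (Fin n ⊕ Fin n) (Fin n ⊕ Fin n) ℂ)
    (P : Submodule ℂ (CV n))
    (hP : ∀ x ∈ P, x ≠ 0 → 0 < (star x ⬝ᵥ (fromBlocks 0 1 1 0 : Matrix _ _ ℂ) *ᵥ x).re -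
      (star (M *ᵥ x) ⬝ᵥ (fromBlocks 0 1 1 0 : Matrix _ _ ℂ) *ᵥ (M *ᵥ x)).re) :
    finrank ℂ P ≤ posInd (symForm2 n) (LinearMap.graph M.mulVecLin) (LN n) (LD n) := by
  let g : CV n →ₗ[ℂ] CV n × CV n := LinearMap.prod LinearMap.id M.mulVecLin
  have hg : Function.Injective g := fun x y h => (Prod.ext_iff.1 h).1
  have hbdd : BddAbove {k : ℕ | ∃ P : Submodule ℂ (CV n × CV n),
      P ≤ (LinearMap.graph M.mulVecLin) ⊓ (LN n ⊔ LD n) ∧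
      (∀ x ∈ P, x ≠ 0 → ∀ y ∈ LN n, ∀ z ∈ LD n, x = y + z → 0 < (symForm2 n y z).re) ∧
      k = Module.finrank ℂ P} := by
    refine ⟨finrank ℂ (CV n × CV n), ?_⟩
    rintro k ⟨P, _, _, rfl⟩
    exact Submodule.finrank_le P
  have hsup : ∀ x : CV n, ∃ y ∈ LnN n, ∃ z ∈ LnD n, y + z = x := by
    intro x
    refine ⟨Sum.elim 0 (fun i => x (Sum.inr i)), ?_, Sum.elim (fun i => x (Sum.inl i)) 0, ?_, ?_⟩
    · exact LinearMap.mem_ker.2 (by ext i; simp [LinearMap.funLeft])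
    · exact LinearMap.mem_ker.2 (by ext i; simp [LinearMap.funLeft])
    · ext i; cases i <;> simp
  refine le_csSup hbdd ⟨P.map g, ?_, ?_, ?_⟩
  · rintro _ ⟨x, hx, rfl⟩
    refine ⟨?_, ?_⟩
    · simp [g]
    · obtain ⟨y, hy, z, hz, h⟩ := hsup x
      obtain ⟨y', hy', z', hz', h'⟩ := hsup (M *ᵥ x)
      refine Submodule.mem_sup.2 ⟨(y, y'), ⟨hy, hy'⟩, (z, z'), ⟨hz, hz'⟩, ?_⟩
      simp [g, h, h']
  · rintro _ ⟨x, hx, rfl⟩ hx0 ⟨y, y'⟩ ⟨hy, hy'⟩ ⟨z, z'⟩ ⟨hz, hz'⟩ h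
    have hx1 : x ≠ 0 := fun h => hx0 (by rw [h, map_zero])
    have h1 : x = y + z := (Prod.ext_iff.1 h).1
    have h2 : M *ᵥ x = y' + z' := (Prod.ext_iff.1 h).2
    have := hP x hx hx1
    rw [h2, R_form n y' z' hy' hz', h1, R_form n y z hy hz] at this
    simp only [symForm2, Complex.add_re, Complex.neg_re]
    linarith
  · exact (Submodule.equivMapOfInjective g hg P).finrank_eq

lemma main_pos (n : ℕ) (M : Matrix (Fin n ⊕ Fin n) (Fin n ⊕ Fin n) ℂ)
    (hR : Mᴴ * fromBlocks 0 1 1 0 = fromBlocks 0 1 1 0 * M)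
    (S : Finset ℂ) (hS : ∀ l ∈ S, 0 < l.im) :
    finrank ℂ ↥(⨆ l ∈ S, Module.End.eigenspace M.mulVecLin l) ≤
      posInd (symForm2 n) (LinearMap.graph M.mulVecLin) (LN n) (LD n) := by
  set R : Matrix (Fin n ⊕ Fin n) (Fin n ⊕ Fin n) ℂ := fromBlocks 0 1 1 0 with hRdef
  have hRH : Rᴴ = R := by rw [hRdef, fromBlocks_conjTranspose]; simp
  have hRR : R * R = 1 := by rw [hRdef, fromBlocks_multiply]; simp
  set W := ⨆ l ∈ S, Module.End.eigenspace M.mulVecLin l with hW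
  set K := R * (1 - M * M) with hK
  have hKexp : ∀ x, star x ⬝ᵥ K *ᵥ x = star x ⬝ᵥ R *ᵥ x - star (M *ᵥ x) ⬝ᵥ R *ᵥ (M *ᵥ x) := by
    intro x
    have : K = R - Mᴴ * R * M := by rw [hR, hK]; noncomm_ring
    rw [this, sub_mulVec, dotProduct_sub, star_mulVec, ← dotProduct_mulVec, mulVec_mulVec,
      mulVec_mulVec, mul_assoc]
  have hKH : K.IsHermitian := by
    have : K = R - Mᴴ * R * M := by rw [hR, hK]; noncomm_ring
    rw [this, Matrix.IsHermitian]
    simp [conjTranspose_sub, conjTranspose_mul, hRH, mul_assoc]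
  have hadj : ∀ x y, star x ⬝ᵥ R *ᵥ (M *ᵥ y) = star (M *ᵥ x) ⬝ᵥ R *ᵥ y := by
    intro x y
    rw [star_mulVec, ← dotProduct_mulVec, mulVec_mulVec, mulVec_mulVec, hR]
  have hiso1 : ∀ l ∈ S, ∀ m ∈ S, ∀ x ∈ Module.End.eigenspace M.mulVecLin l,
      ∀ y ∈ Module.End.eigenspace M.mulVecLin m, star x ⬝ᵥ R *ᵥ y = 0 := by
    intro l hl m hm x hx y hy
    have hx' : M *ᵥ x = l • x := Module.End.mem_eigenspace_iff.1 hx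
    have hy' : M *ᵥ y = m • y := Module.End.mem_eigenspace_iff.1 hy
    have h := hadj x y
    rw [hx', hy', mulVec_smul, dotProduct_smul, star_smul, smul_dotProduct, smul_eq_mul,
      smul_eq_mul] at h
    have hne : m - star l ≠ 0 := by
      intro h0
      have := congrArg Complex.im h0
      simp at this
      have := hS l hl
      have := hS m hm
      linarith
    have : (m - star l) * (star x ⬝ᵥ R *ᵥ y) = 0 := by rw [sub_mul, h, sub_self]
    exact (mul_eq_zero.1 this).resolve_left hne
  have hiso2 : ∀ l ∈ S, ∀ x ∈ Module.End.eigenspace M.mulVecLin l,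
      ∀ y ∈ W, star x ⬝ᵥ R *ᵥ y = 0 := by
    intro l hl x hx y hy
    have : W ≤ LinearMap.ker ((dotProductBilin ℂ ℂ (star x)) ∘ₗ R.mulVecLin) :=
      iSup₂_le fun m hm y hy => LinearMap.mem_ker.2 (hiso1 l hl m hm x hx y hy)
    exact LinearMap.mem_ker.1 (this hy)
  have hsymm : ∀ x y, star x ⬝ᵥ R *ᵥ y = star (star y ⬝ᵥ R *ᵥ x) := by
    intro x y
    rw [star_dotProduct, star_mulVec, hRH, dotProduct_mulVec]
  have hiso3 : ∀ x ∈ W, ∀ y ∈ W, star x ⬝ᵥ R *ᵥ y = 0 := by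
    intro x hx y hy
    have : W ≤ LinearMap.ker ((dotProductBilin ℂ ℂ (star y)) ∘ₗ R.mulVecLin) :=
      iSup₂_le fun m hm z hz => LinearMap.mem_ker.2 (by
        change star y ⬝ᵥ R *ᵥ z = 0
        rw [hsymm, hiso2 m hm z hz y hy, star_zero])
    have h : star y ⬝ᵥ R *ᵥ x = 0 := LinearMap.mem_ker.1 (this hx)
    rw [hsymm, h, star_zero]
  have hinvar : ∀ x ∈ W, M *ᵥ x ∈ W := by
    have : W ≤ W.comap M.mulVecLin := iSup₂_le fun l hl x hx => by
      have hx' : M *ᵥ x = l • x := Module.End.mem_eigenspace_iff.1 hx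
      change M *ᵥ x ∈ W
      rw [hx']
      exact W.smul_mem _ ((le_iSup₂_of_le (f := fun l (_ : l ∈ S) =>
        Module.End.eigenspace M.mulVecLin l) l hl le_rfl) hx)
    exact this
  obtain ⟨P, hP1, hP2⟩ := pos_aux K hKH W
    (fun w hw => by
      rw [hKexp, hiso3 w hw w hw, hiso3 _ (hinvar w hw) _ (hinvar w hw), sub_zero])
    (fun w hw h0 => by
      have h1 : M *ᵥ (M *ᵥ w) = w := by
        have : R *ᵥ (K *ᵥ w) = 0 := by rw [h0, mulVec_zero]
        rw [hK, mulVec_mulVec, ← mul_assoc, hRR, one_mul, sub_mulVec, one_mulVec,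
          sub_eq_zero, ← mulVec_mulVec] at this
        exact this.symm
      have h2 : w ∈ ⨆ l ∈ ({1, -1} : Set ℂ), Module.End.eigenspace M.mulVecLin l := by
        rw [iSup_pair]
        refine Submodule.mem_sup.2 ⟨(1 / 2 : ℂ) • (w + M *ᵥ w), ?_,
          (1 / 2 : ℂ) • (w - M *ᵥ w), ?_, ?_⟩
        · rw [Module.End.mem_eigenspace_iff]
          simp [mulVec_smul, mulVec_add, h1, add_comm]
        · rw [Module.End.mem_eigenspace_iff]
          simp [mulVec_sub, h1, ← smul_neg]
        · module
      have hdis : Disjoint (⨆ l ∈ ({1, -1} : Set ℂ), Module.End.eigenspace M.mulVecLin l) W := by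
        refine (Module.End.eigenspaces_iSupIndep M.mulVecLin).disjoint_biSup_biSup
          (t := (S : Set ℂ)) ?_
        rw [Set.disjoint_left]
        rintro l (rfl | rfl) hl <;> simpa using hS _ hl
      exact (Submodule.disjoint_def.1 hdis) w h2 hw)
  rw [← hP1]
  refine posInd_ge n M P fun x hx hx0 => ?_
  have := hP2 x hx hx0
  rwa [hKexp, Complex.sub_re] at this

lemma main_ker (n : ℕ) (M : Matrix (Fin n ⊕ Fin n) (Fin n ⊕ Fin n) ℂ)
    (hN : fromBlocks (-1 : Matrix (Fin n) (Fin n) ℂ) 0 0 1 * M * fromBlocks (-1) 0 0 1 * M = 1)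
    (S : Finset ℂ) (hS : ∀ l ∈ S, l = 1 ∨ l = -1) :
    finrank ℂ ↥(⨆ l ∈ S, Module.End.eigenspace M.mulVecLin l) ≤
      finrank ℂ ↥(LinearMap.graph M.mulVecLin ⊓ LN n) +
      finrank ℂ ↥(LinearMap.graph M.mulVecLin ⊓ LD n) := by
  set N : Matrix (Fin n ⊕ Fin n) (Fin n ⊕ Fin n) ℂ := fromBlocks (-1) 0 0 1 with hNdef
  let g : CV n →ₗ[ℂ] CV n × CV n := LinearMap.prod LinearMap.id M.mulVecLin
  have hg : Function.Injective g := fun x y h => (Prod.ext_iff.1 h).1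
  have hNN : N * N = 1 := by rw [hNdef, fromBlocks_multiply]; simp
  have hplus : ∀ x : CV n, x + N *ᵥ x ∈ LnN n := by
    intro x
    refine LinearMap.mem_ker.2 ?_
    ext i
    simp [LinearMap.funLeft, hNdef, mulVec, dotProduct, Matrix.one_apply]
  have hminus : ∀ x : CV n, x - N *ᵥ x ∈ LnD n := by
    intro x
    refine LinearMap.mem_ker.2 ?_
    ext i
    simp [LinearMap.funLeft, hNdef, mulVec, dotProduct, Matrix.one_apply]
  rw [(Submodule.equivMapOfInjective g hg _).finrank_eq]
  refine le_trans (Submodule.finrank_mono ?_) (Submodule.finrank_add_le_finrank_add_finrank _ _)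
  rw [Submodule.map_le_iff_le_comap]
  refine iSup₂_le fun l hl x hx => ?_
  have hx' : M *ᵥ x = l • x := Module.End.mem_eigenspace_iff.1 hx
  have hll : l * l = 1 := by rcases hS l hl with rfl | rfl <;> simp
  have hcomm : M *ᵥ (N *ᵥ x) = l • (N *ᵥ x) := by
    have h1 : N *ᵥ (N *ᵥ (M *ᵥ (N *ᵥ (M *ᵥ x)))) = N *ᵥ x := by
      congr 1
      simp only [mulVec_mulVec, ← mul_assoc, hN, one_mulVec]
    rw [mulVec_mulVec, hNN, one_mulVec, hx', mulVec_smul, mulVec_smul] at h1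
    conv_rhs => rw [← h1, smul_smul, hll, one_smul]
  refine Submodule.mem_sup.2 ⟨(1 / 2 : ℂ) • g (x + N *ᵥ x), ?_, (1 / 2 : ℂ) • g (x - N *ᵥ x), ?_, ?_⟩
  · refine Submodule.smul_mem _ _ ⟨by simp [g], hplus x, ?_⟩
    change M *ᵥ (x + N *ᵥ x) ∈ LnN n
    rw [mulVec_add, hx', hcomm, ← smul_add]
    exact Submodule.smul_mem _ _ (hplus x)
  · refine Submodule.smul_mem _ _ ⟨by simp [g], hminus x, ?_⟩
    change M *ᵥ (x - N *ᵥ x) ∈ LnD n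
    rw [mulVec_sub, hx', hcomm, ← smul_sub]
    exact Submodule.smul_mem _ _ (hminus x)
  · rw [map_add, map_sub]
    module

/-- For a brake-symmetric matrix `M ∈ Sp(2n)` (`N M N = M⁻¹`), with
`m⁺ = m⁺(𝔔(Gr(M),Λ_N;Λ_D))`, `d_N = dim(Gr(M)∩Λ_N)`, `d_D = dim(Gr(M)∩Λ_D)`:
(i) the sum of `dim ker(M − λI)` over eigenvalues `λ` with `Im λ > 0` together
with `λ ∈ {1,−1}` is at most `m⁺ + d_N + d_D`; (ii) the sum over eigenvalues
with `Im λ > 0` is at most `m⁺ + d_D`. -/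
theorem brake_eigenvalue_dim_estimates (n : ℕ)
    (M : Matrix (Fin n ⊕ Fin n) (Fin n ⊕ Fin n) ℝ)
    (hM : Mᵀ * Matrix.J (Fin n) ℝ * M = Matrix.J (Fin n) ℝ)
    (hbrake : fromBlocks (-1 : Matrix (Fin n) (Fin n) ℝ) 0 0 1 * M
        * fromBlocks (-1) 0 0 1 = M⁻¹) :
    (∀ S : Finset ℂ, (∀ lam ∈ S, 0 < lam.im ∨ lam = 1 ∨ lam = -1) →
      ∑ lam ∈ S, Module.finrank ℂ
          ↥(LinearMap.ker ((M.map Complex.ofReal).mulVecLin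
              - lam • (LinearMap.id : CV n →ₗ[ℂ] CV n)))
        ≤ posInd (symForm2 n)
            (LinearMap.graph ((M.map Complex.ofReal).mulVecLin)) (LN n) (LD n)
          + Module.finrank ℂ
              ↥(LinearMap.graph ((M.map Complex.ofReal).mulVecLin) ⊓ LN n)
          + Module.finrank ℂ
              ↥(LinearMap.graph ((M.map Complex.ofReal).mulVecLin) ⊓ LD n))
    ∧ (∀ S : Finset ℂ, (∀ lam ∈ S, 0 < lam.im) →
      ∑ lam ∈ S, Module.finrank ℂ
          ↥(LinearMap.ker ((M.map Complex.ofReal).mulVecLin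
              - lam • (LinearMap.id : CV n →ₗ[ℂ] CV n)))
        ≤ posInd (symForm2 n)
            (LinearMap.graph ((M.map Complex.ofReal).mulVecLin)) (LN n) (LD n)
          + Module.finrank ℂ
              ↥(LinearMap.graph ((M.map Complex.ofReal).mulVecLin) ⊓ LD n)) := by
  obtain ⟨hR, hN⟩ := mat_facts_C n M hM hbrake
  refine ⟨fun S hS => ?_, fun S hS => ?_⟩
  · rw [← Finset.sum_filter_add_sum_filter_not S (fun l : ℂ => 0 < l.im), sum_finrank, sum_finrank,
      add_assoc]
    refine add_le_add (main_pos n _ hR _ fun l hl => (Finset.mem_filter.1 hl).2)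
      (main_ker n _ hN _ fun l hl => ?_)
    have h := Finset.mem_filter.1 hl
    exact (hS l h.1).resolve_left h.2
  · rw [sum_finrank]
    exact (main_pos n _ hR S hS).trans (Nat.le_add_right _ _)
end
end
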